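/- For every ν ∈ (0,1), the relaxation response of the fractional modified Maxwell model exhibits ultra-slow (logarithmic) decay: Γ(1−ν) · (log(1+t))^ν · E_ν(−(log(1+t))^ν) → 1 as t → +∞. Equivalently, E_ν(−(log(1+t))^ν) ∼ (log(1+t))^{−ν}/Γ(1−ν) as t → ∞; in particular the relaxation response tends to 0 at infinity. -/

import Mathlib

open Real Filter

/-- The Mittag-Leffler function `E_ν(x) = ∑_{k=0}^∞ x^k / Γ(νk+1)`. -/
noncomputable def mittagLeffler (ν x : ℝ) : ℝ :=
  ∑' k : ℕ, x ^ k / Real.Gamma (ν * k + 1)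

/-!
The functions `F_β(t) = t^(β-1) E_{ν,β}(-t^ν)` satisfy `I^α F_β = F_{α+β}` (Riemann-Liouville
integral of order `α`) and `F_β = t^(β-1)/Γ(β) - F_{β+ν}`. For `β = ν` these say that `F_ν` is the
Volterra resolvent of the kernel `t^(ν-1)/Γ(ν)`. The kernel is log-convex, which forces `F_ν > 0`:
at a first zero `T`, compare the resolvent equation with the one at an earlier time.

Hence `u(t) = F_1(t) = E_ν(-t^ν) = 1 - ∫_0^t F_ν` is decreasing and nonnegative, and
`u(t) t^ν/Γ(ν+1) ≤ (I^ν u)(t) = 1 - u(t) ≤ 1`. Then `F_{2-ν} = I^(1-ν) u = O(t^(1-2ν))` is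
negligible in `∫_0^t u = F_2 = t^(1-ν)/Γ(2-ν) - F_{2-ν}`, and since `u` is monotone this asymptotic
relation may be differentiated: `u(t) ~ t^(-ν)/Γ(1-ν)`. Finally substitute `t = log(1+x)`.
-/

open MeasureTheory Set Topology intervalIntegral

/-! ### Volterra resolvents -/

/-- `r` is the resolvent of the convolution kernel `k`: it solves the Volterra equation
`r + k ∗ r = k` on `(0, ∞)`. Integrability is recorded so that `∫` is not a junk value. -/
structure IsVolterraResolvent (k r : ℝ → ℝ) : Prop where
  intervalIntegrable : ∀ ⦃t⦄, 0 < t → IntervalIntegrable (fun s => k (t - s) * r s) volume 0 t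
  eq_sub_integral : ∀ ⦃t⦄, 0 < t → r t = k t - ∫ s in 0..t, k (t - s) * r s

theorem exists_first_nonpos {f : ℝ → ℝ} {t : ℝ} (hf : ContinuousOn f (Ioi 0))
    (hf0 : ∀ᶠ s in 𝓝[>] 0, 0 < f s) (ht : 0 < t) (hft : f t ≤ 0) :
    ∃ T, 0 < T ∧ f T ≤ 0 ∧ ∀ s ∈ Ioo 0 T, 0 < f s := by
  obtain ⟨δ, hδ : 0 < δ, hδpos⟩ := mem_nhdsGT_iff_exists_Ioc_subset.1 hf0
  have hsub : Icc δ t ⊆ Ioi 0 := fun s hs => hδ.trans_le hs.1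
  have hδt : δ ≤ t := le_of_not_ge fun h => (hδpos ⟨ht, h⟩).not_ge hft
  have hcompact : IsCompact (Icc δ t ∩ f ⁻¹' Iic 0) :=
    isCompact_Icc.of_isClosed_subset
      ((hf.mono hsub).preimage_isClosed_of_isClosed isClosed_Icc isClosed_Iic) inter_subset_left
  obtain ⟨T, ⟨hTmem, hfT⟩, hleast⟩ := hcompact.exists_isLeast ⟨t, ⟨hδt, le_rfl⟩, hft⟩
  refine ⟨T, hsub hTmem, hfT, fun s hs => ?_⟩
  rcases le_or_gt s δ with hsδ | hsδ
  · exact hδpos ⟨hs.1, hsδ⟩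
  · by_contra! hfs
    exact hs.2.not_ge (hleast ⟨⟨hsδ.le, hs.2.le.trans hTmem.2⟩, hfs⟩)

theorem intervalIntegrable_left_right {f : ℝ → ℝ} {a b c : ℝ} (hab : a ≤ b) (hbc : b ≤ c)
    (hf : IntervalIntegrable f volume a c) :
    IntervalIntegrable f volume a b ∧ IntervalIntegrable f volume b c := by
  have hb : b ∈ uIcc a c := Icc_subset_uIcc ⟨hab, hbc⟩
  exact ⟨hf.mono_set (uIcc_subset_uIcc_left hb), hf.mono_set (uIcc_subset_uIcc_right hb)⟩

theorem integral_comp_sub_mul_le {k r : ℝ → ℝ} {p T M : ℝ} (hpT : p ≤ T)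
    (hk : ∀ s ∈ Ioo 0 (T - p), 0 ≤ k s) (hk_int : IntervalIntegrable k volume 0 (T - p))
    (hint : IntervalIntegrable (fun s => k (T - s) * r s) volume p T)
    (hr : ∀ s ∈ Ioo p T, r s ≤ M) :
    ∫ s in p..T, k (T - s) * r s ≤ (∫ s in 0..(T - p), k s) * M := by
  have hreflect : ∫ s in p..T, k (T - s) * M = (∫ s in 0..(T - p), k s) * M := by
    rw [intervalIntegral.integral_mul_const, integral_comp_sub_left, sub_self]
  have hk_int' : IntervalIntegrable (fun s => k (T - s)) volume p T := by
    simpa using (hk_int.comp_sub_left T).symm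
  rw [← hreflect]
  refine integral_mono_on_of_le_Ioo hpT hint (hk_int'.mul_const M) fun s hs => ?_
  exact mul_le_mul_of_nonneg_left (hr s hs) (hk _ ⟨sub_pos.2 hs.2, by linarith [hs.1]⟩)

theorem eventually_mul_integral_lt {k : ℝ → ℝ} {T : ℝ} (hk_pos : ∀ t, 0 < t → 0 < k t)
    (hk_anti : AntitoneOn k (Ioi 0)) (hk_int : ∀ t, IntervalIntegrable k volume 0 t)
    (hT : 0 < T) : ∀ᶠ p in 𝓝[<] T, k p * ∫ s in 0..(T - p), k s < k T := by
  have hT2 : 0 < T / 2 := half_pos hT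
  have hprim : Tendsto (fun p => ∫ s in 0..(T - p), k s) (𝓝[<] T) (𝓝 0) := by
    have hcont : Continuous fun p => ∫ s in 0..(T - p), k s :=
      (continuous_primitive (fun a b => (hk_int a).symm.trans (hk_int b)) 0).comp
        (continuous_const.sub continuous_id)
    simpa using (hcont.tendsto T).mono_left nhdsWithin_le_nhds
  filter_upwards [hprim.eventually_lt_const (div_pos (hk_pos T hT) (hk_pos _ hT2)),
    Ioo_mem_nhdsLT (half_lt_self hT)] with p hp hpmem
  have hp0 : 0 < p := hT2.trans hpmem.1
  calc k p * ∫ s in 0..(T - p), k s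
    _ < k p * (k T / k (T / 2)) := mul_lt_mul_of_pos_left hp (hk_pos p hp0)
    _ ≤ k (T / 2) * (k T / k (T / 2)) := mul_le_mul_of_nonneg_right
        (hk_anti hT2 hp0 hpmem.1.le) (div_nonneg (hk_pos T hT).le (hk_pos _ hT2).le)
    _ = k T := mul_div_cancel₀ _ (hk_pos _ hT2).ne'

/-- A Gronwall argument: `p` maximises `r` on a short interval `[τ, T]`. -/
theorem exists_mul_integral_comp_sub_mul_lt {k r : ℝ → ℝ} {T : ℝ}
    (hk_pos : ∀ t, 0 < t → 0 < k t) (hk_anti : AntitoneOn k (Ioi 0))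
    (hk_int : ∀ t, IntervalIntegrable k volume 0 t) (hT : 0 < T)
    (hint : IntervalIntegrable (fun s => k (T - s) * r s) volume 0 T)
    (hr : ContinuousOn r (Ioi 0)) (hr_pos : ∀ s ∈ Ioo 0 T, 0 < r s) (hrT : r T ≤ 0) :
    ∃ p ∈ Ioo 0 T, k p * ∫ s in p..T, k (T - s) * r s < k T * r p := by
  obtain ⟨τ, hτT, hτ⟩ := mem_nhdsLT_iff_exists_Ico_subset.1 <| inter_mem
    (eventually_mul_integral_lt hk_pos hk_anti hk_int hT) (Ioo_mem_nhdsLT hT)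
  have hτ0 : 0 < τ := (hτ ⟨le_rfl, hτT⟩).2.1
  obtain ⟨p, hp, hpmax⟩ := isCompact_Icc.exists_isMaxOn (nonempty_Icc.2 (le_of_lt hτT))
    (hr.mono fun s (hs : s ∈ Icc τ T) => hτ0.trans_le hs.1)
  have hrp : 0 < r p := (hr_pos τ ⟨hτ0, hτT⟩).trans_le (hpmax ⟨le_rfl, le_of_lt hτT⟩)
  have hpT : p < T := hp.2.lt_of_ne fun h => (h ▸ hrp).not_ge hrT
  obtain ⟨hsmall, hp0T⟩ := hτ ⟨hp.1, hpT⟩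
  refine ⟨p, hp0T, ?_⟩
  have hle : ∫ s in p..T, k (T - s) * r s ≤ (∫ s in 0..(T - p), k s) * r p :=
    integral_comp_sub_mul_le hpT.le (fun s hs => (hk_pos s hs.1).le) (hk_int _)
      (intervalIntegrable_left_right hp0T.1.le hpT.le hint).2
      fun s hs => hpmax ⟨hp.1.trans hs.1.le, hs.2.le⟩
  calc k p * ∫ s in p..T, k (T - s) * r s
    _ ≤ k p * ((∫ s in 0..(T - p), k s) * r p) :=
        mul_le_mul_of_nonneg_left hle (hk_pos p hp0T.1).le
    _ = (k p * ∫ s in 0..(T - p), k s) * r p := (mul_assoc ..).symm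
    _ < k T * r p := mul_lt_mul_of_pos_right hsmall hrp

namespace IsVolterraResolvent

variable {k r : ℝ → ℝ} {t T : ℝ}

theorem mul_le_of_logConvex (h : IsVolterraResolvent k r) (ht : 0 < t) (htT : t < T)
    (hk : ∀ s ∈ Ioo 0 t, k (T - s) * k t ≤ k T * k (t - s)) (hr : ∀ s ∈ Ioo 0 t, 0 ≤ r s) :
    k T * r t ≤ k t * (r T + ∫ s in t..T, k (T - s) * r s) := by
  have hT := ht.trans htT
  obtain ⟨hint, hint'⟩ := intervalIntegrable_left_right ht.le htT.le (h.intervalIntegrable hT)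
  have hcmp : k t * ∫ s in 0..t, k (T - s) * r s ≤ k T * ∫ s in 0..t, k (t - s) * r s := by
    rw [← intervalIntegral.integral_const_mul, ← intervalIntegral.integral_const_mul]
    refine integral_mono_on_of_le_Ioo ht.le (hint.const_mul _)
      ((h.intervalIntegrable ht).const_mul _) fun s hs => ?_
    linarith [mul_le_mul_of_nonneg_right (hk s hs) (hr s hs)]
  rw [h.eq_sub_integral ht, h.eq_sub_integral hT, ← integral_add_adjacent_intervals hint hint']
  linarith

theorem pos_of_logConvex (h : IsVolterraResolvent k r)
    (hk_pos : ∀ t, 0 < t → 0 < k t) (hk_anti : AntitoneOn k (Ioi 0))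
    (hk_int : ∀ t, IntervalIntegrable k volume 0 t)
    (hk_conv : ∀ s t T, 0 < s → s < t → t < T → k (T - s) * k t ≤ k T * k (t - s))
    (hr : ContinuousOn r (Ioi 0)) (hr0 : ∀ᶠ s in 𝓝[>] 0, 0 < r s) (ht : 0 < t) : 0 < r t := by
  by_contra! hrt
  obtain ⟨T, hT, hrT, hpos⟩ := exists_first_nonpos hr hr0 ht hrt
  obtain ⟨p, ⟨hp0, hpT⟩, hlt⟩ := exists_mul_integral_comp_sub_mul_lt hk_pos hk_anti hk_int hT
    (h.intervalIntegrable hT) hr hpos hrT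
  have hle := h.mul_le_of_logConvex hp0 hpT (fun s hs => hk_conv s p T hs.1 hs.2 hpT)
    fun s hs => (hpos s ⟨hs.1, hs.2.trans hpT⟩).le
  linarith [mul_nonpos_of_nonneg_of_nonpos (hk_pos p hp0).le hrT]

end IsVolterraResolvent

/-! ### Monotone density -/

theorem slope_integral_mem_Icc_of_antitoneOn {u : ℝ → ℝ} {a x y : ℝ} (hxy : x < y)
    (hax : IntervalIntegrable u volume a x) (hu : AntitoneOn u (Icc x y)) :
    slope (fun t => ∫ s in a..t, u s) x y ∈ Icc (u y) (u x) := by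
  have hint : IntervalIntegrable u volume x y :=
    AntitoneOn.intervalIntegrable (by rwa [uIcc_of_le hxy.le])
  have hlower := integral_mono_on hxy.le intervalIntegrable_const hint
    fun s hs => hu hs (right_mem_Icc.2 hxy.le) hs.2
  have hupper := integral_mono_on hxy.le hint intervalIntegrable_const
    fun s hs => hu (left_mem_Icc.2 hxy.le) hs hs.1
  rw [intervalIntegral.integral_const, smul_eq_mul] at hlower hupper
  rw [slope_def_field, integral_interval_sub_left (hax.trans hint) hax]
  exact ⟨(le_div_iff₀' (sub_pos.2 hxy)).2 hlower, (div_le_iff₀' (sub_pos.2 hxy)).2 hupper⟩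

theorem tendsto_slope_integral_div_rpow {u : ℝ → ℝ} {ρ C a : ℝ} (ha : 0 < a)
    (hlim : Tendsto (fun t => (∫ s in 0..t, u s) / t ^ ρ) atTop (𝓝 C)) :
    Tendsto (fun t => slope (fun x => ∫ s in 0..x, u s) t (a * t) / t ^ (ρ - 1)) atTop
      (𝓝 (slope (fun x => x ^ ρ) 1 a * C)) := by
  have hscale := (hlim.comp (tendsto_id.const_mul_atTop ha)).const_mul (a ^ ρ)
  refine (((hscale.sub hlim).div_const (a - 1)).congr' ?_).trans_eq ?_
  · filter_upwards [eventually_gt_atTop 0] with t ht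
    have htρ : t ^ ρ ≠ 0 := by positivity
    have haρ : a ^ ρ ≠ 0 := by positivity
    simp only [Function.comp_apply, id, slope_def_field, mul_rpow ha.le ht.le, rpow_sub_one ht.ne']
    rw [show a * t - t = (a - 1) * t by ring]
    field_simp
  · rw [slope_def_field, one_rpow]
    ring_nf

theorem tendsto_div_rpow_of_tendsto_integral_div_rpow {u : ℝ → ℝ} {ρ C : ℝ}
    (hu : AntitoneOn u (Ioi 0)) (hint : ∀ t, 0 < t → IntervalIntegrable u volume 0 t)
    (hlim : Tendsto (fun t => (∫ s in 0..t, u s) / t ^ ρ) atTop (𝓝 C)) :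
    Tendsto (fun t => u t / t ^ (ρ - 1)) atTop (𝓝 (ρ * C)) := by
  have hderiv : HasDerivAt (fun x : ℝ => x ^ ρ) ρ 1 := by
    simpa using hasDerivAt_rpow_const (x := 1) (p := ρ) (Or.inl one_ne_zero)
  have hslope := (hasDerivAt_iff_tendsto_slope.1 hderiv).mul_const C
  have hbound : ∀ ⦃x y⦄, 0 < x → x < y →
      slope (fun t => ∫ s in 0..t, u s) x y ∈ Icc (u y) (u x) := fun x y hx hxy =>
    slope_integral_mem_Icc_of_antitoneOn hxy (hint x hx) (hu.mono fun s hs => hx.trans_le hs.1)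
  refine tendsto_order.2 ⟨fun c hc => ?_, fun c hc => ?_⟩
  · have hright := hslope.mono_left (nhdsGT_le_nhdsNE 1)
    obtain ⟨a, hca, ha : 1 < a⟩ :=
      ((hright.eventually_const_lt hc).and self_mem_nhdsWithin).exists
    have hmean := tendsto_slope_integral_div_rpow (one_pos.trans ha) hlim
    filter_upwards [hmean.eventually_const_lt hca, eventually_gt_atTop 0] with t hct ht
    exact hct.trans_le (div_le_div_of_nonneg_right (hbound ht (by nlinarith)).2 (by positivity))
  · have hleft := hslope.mono_left (nhdsLT_le_nhdsNE 1)
    obtain ⟨a, hca, ha⟩ := ((hleft.eventually_lt_const hc).and (Ioo_mem_nhdsLT one_pos)).exists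
    have hmean := tendsto_slope_integral_div_rpow ha.1 hlim
    filter_upwards [hmean.eventually_lt_const hca, eventually_gt_atTop 0] with t hct ht
    rw [slope_comm] at hct
    have hat : 0 < a * t := mul_pos ha.1 ht
    exact (div_le_div_of_nonneg_right (hbound hat (by nlinarith [ha.2])).1
      (by positivity)).trans_lt hct

/-! ### Fractional integrals -/

/-- The kernel `s ↦ s^(α-1) / Γ(α)` whose convolution with a function is its Riemann-Liouville
integral of order `α`. -/
noncomputable def rpowKernel (α t : ℝ) : ℝ := t ^ (α - 1) / Gamma α

/-- The Riemann-Liouville fractional integral `I^α f` of order `α`, based at `0`. -/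
noncomputable def fracIntegral (α : ℝ) (f : ℝ → ℝ) (t : ℝ) : ℝ :=
  ∫ s in 0..t, rpowKernel α (t - s) * f s

section FracIntegral

variable {α β c s t T : ℝ} {f g : ℝ → ℝ}

@[simp]
theorem rpowKernel_one (t : ℝ) : rpowKernel 1 t = 1 := by
  simp [rpowKernel]

theorem rpowKernel_pos (hα : 0 < α) (ht : 0 < t) : 0 < rpowKernel α t :=
  div_pos (rpow_pos_of_pos ht _) (Gamma_pos_of_pos hα)

theorem integral_sub_rpow_mul_rpow (hα : 0 < α) (hβ : 0 < β) (ht : 0 < t) :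
    ∫ s in 0..t, (t - s) ^ (α - 1) * s ^ (β - 1) =
      t ^ (α + β - 1) * (Gamma α * Gamma β / Gamma (α + β)) := by
  have h := Complex.betaIntegral_scaled β α ht
  rw [Complex.betaIntegral_eq_Gamma_mul_div _ _ (by simpa) (by simpa),
    show (β : ℂ) + α - 1 = (α + β - 1 : ℝ) by push_cast; ring, ← Complex.ofReal_cpow ht.le,
    ← Complex.ofReal_add, Complex.Gamma_ofReal, Complex.Gamma_ofReal, Complex.Gamma_ofReal] at h
  have hreal : ∫ s in 0..t, (s : ℂ) ^ (β - 1 : ℂ) * (t - s : ℂ) ^ (α - 1 : ℂ) =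
      ((∫ s in 0..t, (t - s) ^ (α - 1) * s ^ (β - 1) : ℝ) : ℂ) := by
    rw [← intervalIntegral.integral_ofReal]
    refine integral_congr fun s hs => ?_
    rw [uIcc_of_le ht.le] at hs
    simp only [Complex.ofReal_mul, Complex.ofReal_cpow hs.1,
      Complex.ofReal_cpow (sub_nonneg.2 hs.2), Complex.ofReal_sub, Complex.ofReal_one, mul_comm]
  rw [hreal] at h
  norm_cast at h
  rw [h, mul_comm (Gamma β), add_comm β]

theorem fracIntegral_rpowKernel (hα : 0 < α) (hβ : 0 < β) (ht : 0 < t) :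
    fracIntegral α (rpowKernel β) t = rpowKernel (α + β) t := by
  have hΓα := (Gamma_pos_of_pos hα).ne'
  have hΓβ := (Gamma_pos_of_pos hβ).ne'
  simp only [fracIntegral, rpowKernel, div_mul_div_comm]
  rw [intervalIntegral.integral_div, integral_sub_rpow_mul_rpow hα hβ ht]
  field_simp

theorem intervalIntegrable_rpowKernel_mul_rpowKernel (hα : 0 < α) (hβ : 0 < β) (ht : 0 < t) :
    IntervalIntegrable (fun s => rpowKernel α (t - s) * rpowKernel β s) volume 0 t := by
  by_contra h
  have hpos := rpowKernel_pos (add_pos hα hβ) ht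
  rw [← fracIntegral_rpowKernel hα hβ ht, fracIntegral, integral_undef h] at hpos
  exact hpos.false

theorem intervalIntegrable_rpowKernel (hα : 0 < α) (t : ℝ) :
    IntervalIntegrable (rpowKernel α) volume 0 t :=
  (intervalIntegrable_rpow' (by linarith)).div_const _

theorem rpowKernel_antitoneOn (hα : 0 < α) (hα1 : α ≤ 1) :
    AntitoneOn (rpowKernel α) (Ioi 0) := fun _ hs _ _ hst =>
  div_le_div_of_nonneg_right (rpow_le_rpow_of_nonpos hs hst (by linarith))
    (Gamma_pos_of_pos hα).le

theorem rpowKernel_sub_mul_le (hα1 : α ≤ 1) (hs : 0 ≤ s) (hst : s < t) (htT : t ≤ T) :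
    rpowKernel α (T - s) * rpowKernel α t ≤ rpowKernel α T * rpowKernel α (t - s) := by
  have ht : 0 < t := hs.trans_lt hst
  simp only [rpowKernel, div_mul_div_comm]
  rw [← mul_rpow (by linarith) ht.le, ← mul_rpow (by linarith) (by linarith)]
  refine div_le_div_of_nonneg_right (rpow_le_rpow_of_nonpos ?_ ?_ (by linarith))
    (mul_self_nonneg _)
  · exact mul_pos (by linarith) (by linarith)
  · nlinarith

@[simp]
theorem fracIntegral_one (f : ℝ → ℝ) (t : ℝ) : fracIntegral 1 f t = ∫ s in 0..t, f s := by
  simp [fracIntegral]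

theorem fracIntegral_const_mul (α c : ℝ) (f : ℝ → ℝ) (t : ℝ) :
    fracIntegral α (fun s => c * f s) t = c * fracIntegral α f t := by
  simp only [fracIntegral, mul_left_comm _ c]
  exact intervalIntegral.integral_const_mul ..

theorem fracIntegral_mono (hα : 0 < α) (ht : 0 ≤ t)
    (hf : IntervalIntegrable (fun s => rpowKernel α (t - s) * f s) volume 0 t)
    (hg : IntervalIntegrable (fun s => rpowKernel α (t - s) * g s) volume 0 t)
    (hfg : ∀ s ∈ Ioo 0 t, f s ≤ g s) : fracIntegral α f t ≤ fracIntegral α g t :=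
  integral_mono_on_of_le_Ioo ht hf hg fun s hs =>
    mul_le_mul_of_nonneg_left (hfg s hs) (rpowKernel_pos hα (sub_pos.2 hs.2)).le

theorem fracIntegral_nonneg (hα : 0 < α) (ht : 0 ≤ t) (hf : ∀ s ∈ Ioo 0 t, 0 ≤ f s) :
    0 ≤ fracIntegral α f t := by
  rw [fracIntegral, integral_of_le ht, integral_Ioc_eq_integral_Ioo]
  exact setIntegral_nonneg measurableSet_Ioo fun s hs =>
    mul_nonneg (rpowKernel_pos hα (sub_pos.2 hs.2)).le (hf s hs)

theorem mul_rpowKernel_le_fracIntegral (hα : 0 < α) (ht : 0 < t)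
    (hint : IntervalIntegrable (fun s => rpowKernel α (t - s) * f s) volume 0 t)
    (hf : ∀ s ∈ Ioo 0 t, c ≤ f s) : c * rpowKernel (α + 1) t ≤ fracIntegral α f t := by
  rw [← fracIntegral_rpowKernel hα one_pos ht, ← fracIntegral_const_mul]
  refine fracIntegral_mono hα ht.le ?_ hint (by simpa using hf)
  simpa only [mul_left_comm] using
    (intervalIntegrable_rpowKernel_mul_rpowKernel hα one_pos ht).const_mul c

end FracIntegral

/-! ### The two-parameter Mittag-Leffler function -/

theorem rpow_mul_exp_neg_le_Gamma {R y : ℝ} (hR : 0 ≤ R) (hy : 1 ≤ y) :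
    R ^ (y - 1) * exp (-R) ≤ Gamma y := by
  have hy0 : 0 < y := by linarith
  have hint : IntegrableOn (fun x => exp (-x) * x ^ (y - 1)) (Ioi 0) := GammaIntegral_convergent hy0
  rw [Gamma_eq_integral hy0]
  calc R ^ (y - 1) * exp (-R)
    _ = ∫ x in Ioi R, R ^ (y - 1) * exp (-x) := by
        rw [MeasureTheory.integral_const_mul, integral_exp_neg_Ioi]
    _ ≤ ∫ x in Ioi R, exp (-x) * x ^ (y - 1) := by
        refine setIntegral_mono_on ((integrableOn_exp_neg_Ioi R).const_mul _)
          (hint.mono_set (Ioi_subset_Ioi hR)) measurableSet_Ioi fun x (hx : R < x) => ?_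
        rw [mul_comm]
        gcongr
    _ ≤ ∫ x in Ioi 0, exp (-x) * x ^ (y - 1) := by
        refine setIntegral_mono_set hint ?_ (Ioi_subset_Ioi hR).eventuallyLE
        filter_upwards [ae_restrict_mem measurableSet_Ioi] with x hx
        exact mul_nonneg (exp_pos _).le (rpow_nonneg (le_of_lt hx) _)

theorem summable_pow_div_Gamma {ν : ℝ} (hν : 0 < ν) (β x : ℝ) :
    Summable fun k : ℕ => x ^ k / Gamma (ν * k + β) := by
  -- For this `R`, the bound `R ^ (y - 1) * exp (-R) ≤ Γ y` gives a geometric majorant.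
  set R : ℝ := (2 * |x| + 1) ^ ν⁻¹
  have hR0 : 0 < R := by positivity
  have hRν : R ^ ν = 2 * |x| + 1 := rpow_inv_rpow (by positivity) hν.ne'
  have hratio : |x| / R ^ ν < 1 := by
    rw [hRν, div_lt_one (by positivity)]
    linarith [abs_nonneg x]
  have hgeom := (summable_geometric_of_lt_one (by positivity) hratio).mul_left
    (R ^ (1 - β) * exp R)
  refine Summable.of_norm_bounded_eventually_nat hgeom ?_
  have harg : Tendsto (fun k : ℕ => ν * k + β) atTop atTop :=
    tendsto_atTop_add_const_right _ _ (tendsto_natCast_atTop_atTop.const_mul_atTop hν)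
  filter_upwards [harg.eventually_ge_atTop 1] with k hk
  have hΓ := rpow_mul_exp_neg_le_Gamma hR0.le hk
  calc ‖x ^ k / Gamma (ν * k + β)‖
    _ = |x| ^ k / Gamma (ν * k + β) := by
        rw [norm_div, norm_pow, norm_eq_abs, norm_of_nonneg (Gamma_nonneg_of_nonneg (by linarith))]
    _ ≤ |x| ^ k / (R ^ (ν * k + β - 1) * exp (-R)) := by gcongr
    _ = R ^ (1 - β) * exp R * (|x| / R ^ ν) ^ k := by
        rw [show ν * k + β - 1 = ν * k - (1 - β) by ring, rpow_sub hR0, rpow_mul hR0.le,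
          rpow_natCast, div_pow, exp_neg]
        field_simp

/-- The two-parameter Mittag-Leffler function `E_{ν,β}(x) = ∑ x^k / Γ(νk+β)`;
`mittagLeffler ν` is the case `β = 1`. -/
noncomputable def mittagLefflerTwo (ν β x : ℝ) : ℝ :=
  ∑' k : ℕ, x ^ k / Gamma (ν * k + β)

theorem continuous_mittagLefflerTwo {ν : ℝ} (hν : 0 < ν) (β : ℝ) :
    Continuous (mittagLefflerTwo ν β) := by
  refine continuous_iff_continuousAt.2 fun x => ?_
  have hball : ContinuousOn (mittagLefflerTwo ν β) (Metric.ball 0 (|x| + 1)) := by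
    refine continuousOn_tsum (fun k => by fun_prop)
      (summable_pow_div_Gamma hν β (|x| + 1)).norm fun k y hy => ?_
    have hy : |y| ≤ |x| + 1 := (mem_ball_zero_iff.1 hy).le
    rw [norm_div, norm_div, norm_pow, norm_pow, norm_eq_abs y,
      norm_of_nonneg (by positivity : 0 ≤ |x| + 1)]
    gcongr
  exact hball.continuousAt (Metric.isOpen_ball.mem_nhds (by simp))

theorem mittagLefflerTwo_zero (ν β : ℝ) : mittagLefflerTwo ν β 0 = (Gamma β)⁻¹ := by
  rw [mittagLefflerTwo, tsum_eq_single 0 fun k hk => by simp [hk]]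
  simp

theorem mittagLefflerTwo_eq_add {ν : ℝ} (hν : 0 < ν) (β x : ℝ) :
    mittagLefflerTwo ν β x = (Gamma β)⁻¹ + x * mittagLefflerTwo ν (β + ν) x := by
  rw [mittagLefflerTwo, (summable_pow_div_Gamma hν β x).tsum_eq_zero_add, mittagLefflerTwo,
    ← tsum_mul_left]
  congr 1
  · simp
  · refine tsum_congr fun k => ?_
    rw [pow_succ', mul_div_assoc, Nat.cast_succ, show ν * (k + 1) + β = ν * k + (β + ν) by ring]

/-- The function `t ↦ t^(β-1) E_{ν,β}(-t^ν)`, on which fractional integration acts by shifting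
`β`. The relaxation function is the case `β = 1`. -/
noncomputable def mittagLefflerKernel (ν β t : ℝ) : ℝ :=
  t ^ (β - 1) * mittagLefflerTwo ν β (-t ^ ν)

section Kernel

variable {ν α β t : ℝ}

theorem mittagLefflerKernel_one (ν t : ℝ) :
    mittagLefflerKernel ν 1 t = mittagLeffler ν (-t ^ ν) := by
  simp [mittagLefflerKernel, mittagLefflerTwo, mittagLeffler]

theorem mittagLefflerKernel_eq_sub (hν : 0 < ν) (β : ℝ) (ht : 0 < t) :
    mittagLefflerKernel ν β t = rpowKernel β t - mittagLefflerKernel ν (β + ν) t := by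
  rw [mittagLefflerKernel, mittagLefflerTwo_eq_add hν, mittagLefflerKernel, rpowKernel,
    show β + ν - 1 = β - 1 + ν by ring, rpow_add ht]
  ring

theorem rpowKernel_natCast_mul_add (ν β : ℝ) (k : ℕ) (ht : 0 < t) :
    rpowKernel (ν * k + β) t = t ^ (β - 1) * ((t ^ ν) ^ k / Gamma (ν * k + β)) := by
  rw [rpowKernel, show ν * k + β - 1 = β - 1 + ν * k by ring, rpow_add ht, rpow_mul ht.le,
    rpow_natCast, mul_div_assoc]

theorem summable_rpowKernel (hν : 0 < ν) (β : ℝ) (ht : 0 < t) :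
    Summable fun k : ℕ => rpowKernel (ν * k + β) t := by
  simp only [rpowKernel_natCast_mul_add ν β _ ht]
  exact (summable_pow_div_Gamma hν β _).mul_left _

theorem hasSum_mittagLefflerKernel (hν : 0 < ν) (β : ℝ) (ht : 0 < t) :
    HasSum (fun k : ℕ => (-1) ^ k * rpowKernel (ν * k + β) t) (mittagLefflerKernel ν β t) := by
  have hsum := (summable_pow_div_Gamma hν β (-t ^ ν)).hasSum.mul_left (t ^ (β - 1))
  refine hsum.congr_fun fun k => ?_
  rw [rpowKernel_natCast_mul_add ν β k ht, neg_pow (t ^ ν)]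
  ring

theorem continuous_mittagLefflerTwo_neg_rpow (hν : 0 < ν) (β : ℝ) :
    Continuous fun t : ℝ => mittagLefflerTwo ν β (-t ^ ν) :=
  (continuous_mittagLefflerTwo hν β).comp (continuous_rpow_const hν.le).neg

theorem continuousOn_mittagLefflerKernel (hν : 0 < ν) (β : ℝ) :
    ContinuousOn (mittagLefflerKernel ν β) (Ioi 0) :=
  (continuousOn_id.rpow_const fun _ hs => Or.inl (ne_of_gt hs)).mul
    (continuous_mittagLefflerTwo_neg_rpow hν β).continuousOn

theorem intervalIntegrable_rpowKernel_mul_mittagLefflerKernel (hν : 0 < ν) (hα : 0 < α)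
    (hβ : 0 < β) (ht : 0 < t) :
    IntervalIntegrable (fun s => rpowKernel α (t - s) * mittagLefflerKernel ν β s) volume 0 t := by
  have hΓ := (Gamma_pos_of_pos hβ).ne'
  refine ((intervalIntegrable_rpowKernel_mul_rpowKernel hα hβ ht).mul_continuousOn
    ((continuous_mittagLefflerTwo_neg_rpow hν β).const_mul (Gamma β)).continuousOn).congr ?_
  intro s _
  simp only [rpowKernel, mittagLefflerKernel]
  field_simp

theorem fracIntegral_mittagLefflerKernel (hν : 0 < ν) (hα : 0 < α) (hβ : 0 < β) (ht : 0 < t) :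
    fracIntegral α (mittagLefflerKernel ν β) t = mittagLefflerKernel ν (α + β) t := by
  have hpos : ∀ k : ℕ, 0 < ν * k + β := fun k => by positivity
  have hterm : ∀ k : ℕ, ∫ s in Ioc 0 t, rpowKernel α (t - s) * rpowKernel (ν * k + β) s =
      rpowKernel (ν * k + (α + β)) t := fun k => by
    rw [← integral_of_le ht.le, add_left_comm]
    exact fracIntegral_rpowKernel hα (hpos k) ht
  have hint : ∀ k : ℕ, IntegrableOn
      (fun s => (-1) ^ k * (rpowKernel α (t - s) * rpowKernel (ν * k + β) s)) (Ioc 0 t) := fun k =>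
    ((intervalIntegrable_iff_integrableOn_Ioc_of_le ht.le).1
      (intervalIntegrable_rpowKernel_mul_rpowKernel hα (hpos k) ht)).const_mul _
  have hnorm : ∀ k : ℕ,
      ∫ s in Ioc 0 t, ‖(-1) ^ k * (rpowKernel α (t - s) * rpowKernel (ν * k + β) s)‖ =
        rpowKernel (ν * k + (α + β)) t := fun k => by
    rw [← hterm, integral_Ioc_eq_integral_Ioo, integral_Ioc_eq_integral_Ioo]
    refine setIntegral_congr_fun measurableSet_Ioo fun s hs => ?_
    simp [abs_of_pos (rpowKernel_pos hα (sub_pos.2 hs.2)),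
      abs_of_pos (rpowKernel_pos (hpos k) hs.1)]
  have hsum := hasSum_integral_of_summable_integral_norm hint
    (by simpa only [hnorm] using summable_rpowKernel hν (α + β) ht)
  simp only [MeasureTheory.integral_const_mul, hterm] at hsum
  rw [← hsum.unique (hasSum_mittagLefflerKernel hν (α + β) ht), fracIntegral, integral_of_le ht.le]
  refine setIntegral_congr_fun measurableSet_Ioc fun s hs => ?_
  simp only [mul_left_comm ((-1) ^ _ : ℝ), tsum_mul_left,
    (hasSum_mittagLefflerKernel hν β hs.1).tsum_eq]

theorem isVolterraResolvent_mittagLefflerKernel (hν : 0 < ν) :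
    IsVolterraResolvent (rpowKernel ν) (mittagLefflerKernel ν ν) where
  intervalIntegrable _ ht := intervalIntegrable_rpowKernel_mul_mittagLefflerKernel hν hν hν ht
  eq_sub_integral t ht := by
    rw [mittagLefflerKernel_eq_sub hν ν ht, ← fracIntegral_mittagLefflerKernel hν hν hν ht,
      fracIntegral]

theorem eventually_mittagLefflerKernel_pos (hν : 0 < ν) (hβ : 0 < β) :
    ∀ᶠ t in 𝓝[>] 0, 0 < mittagLefflerKernel ν β t := by
  have hlim := ((continuous_mittagLefflerTwo_neg_rpow hν β).tendsto 0).mono_left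
    (nhdsWithin_le_nhds (s := Ioi 0))
  rw [zero_rpow hν.ne', neg_zero, mittagLefflerTwo_zero] at hlim
  filter_upwards [hlim.eventually_const_lt (inv_pos.2 (Gamma_pos_of_pos hβ)), self_mem_nhdsWithin]
    with t hpos ht
  exact mul_pos (rpow_pos_of_pos ht _) hpos

theorem mittagLefflerKernel_self_pos (hν : 0 < ν) (hν1 : ν ≤ 1) (ht : 0 < t) :
    0 < mittagLefflerKernel ν ν t :=
  (isVolterraResolvent_mittagLefflerKernel hν).pos_of_logConvex
    (fun _ hs => rpowKernel_pos hν hs) (rpowKernel_antitoneOn hν hν1)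
    (intervalIntegrable_rpowKernel hν)
    (fun _ _ _ hs hst htT => rpowKernel_sub_mul_le hν1 hs.le hst htT.le)
    (continuousOn_mittagLefflerKernel hν ν) (eventually_mittagLefflerKernel_pos hν hν) ht

theorem mittagLefflerKernel_nonneg (hν : 0 < ν) (hν1 : ν ≤ 1) (hβ : ν ≤ β) (ht : 0 < t) :
    0 ≤ mittagLefflerKernel ν β t := by
  rcases hβ.eq_or_lt with rfl | hβ
  · exact (mittagLefflerKernel_self_pos hν hν1 ht).le
  · rw [← sub_add_cancel β ν, ← fracIntegral_mittagLefflerKernel hν (sub_pos.2 hβ) hν ht]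
    exact fracIntegral_nonneg (sub_pos.2 hβ) ht.le
      fun s hs => (mittagLefflerKernel_self_pos hν hν1 hs.1).le

theorem intervalIntegrable_mittagLefflerKernel (hν : 0 < ν) (hβ : 0 < β) (ht : 0 < t) :
    IntervalIntegrable (mittagLefflerKernel ν β) volume 0 t := by
  simpa using intervalIntegrable_rpowKernel_mul_mittagLefflerKernel hν one_pos hβ ht

theorem integral_mittagLefflerKernel (hν : 0 < ν) (hβ : 0 < β) (ht : 0 < t) :
    ∫ s in 0..t, mittagLefflerKernel ν β s = mittagLefflerKernel ν (1 + β) t := by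
  rw [← fracIntegral_mittagLefflerKernel hν one_pos hβ ht, fracIntegral_one]

theorem mittagLefflerKernel_one_antitoneOn (hν : 0 < ν) (hν1 : ν ≤ 1) :
    AntitoneOn (mittagLefflerKernel ν 1) (Ioi 0) := by
  intro s (hs : 0 < s) t (ht : 0 < t) hst
  rw [mittagLefflerKernel_eq_sub hν 1 hs, mittagLefflerKernel_eq_sub hν 1 ht, rpowKernel_one,
    rpowKernel_one, ← integral_mittagLefflerKernel hν hν hs,
    ← integral_mittagLefflerKernel hν hν ht]
  refine sub_le_sub_left (integral_mono_interval le_rfl hs.le hst ?_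
    (intervalIntegrable_mittagLefflerKernel hν hν ht)) 1
  filter_upwards [ae_restrict_mem measurableSet_Ioc] with x hx
  exact (mittagLefflerKernel_self_pos hν hν1 hx.1).le

theorem mittagLefflerKernel_one_mul_rpowKernel_le (hν : 0 < ν) (hν1 : ν ≤ 1) (ht : 0 < t) :
    mittagLefflerKernel ν 1 t * rpowKernel (ν + 1) t ≤ 1 := by
  calc mittagLefflerKernel ν 1 t * rpowKernel (ν + 1) t
    _ ≤ fracIntegral ν (mittagLefflerKernel ν 1) t :=
        mul_rpowKernel_le_fracIntegral hν ht
          (intervalIntegrable_rpowKernel_mul_mittagLefflerKernel hν hν one_pos ht)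
          fun s hs => mittagLefflerKernel_one_antitoneOn hν hν1 hs.1 ht hs.2.le
    _ = 1 - mittagLefflerKernel ν 1 t := by
        rw [fracIntegral_mittagLefflerKernel hν hν one_pos ht, mittagLefflerKernel_eq_sub hν 1 ht,
          rpowKernel_one, sub_sub_cancel, add_comm]
    _ ≤ 1 := sub_le_self 1 (mittagLefflerKernel_nonneg hν hν1 hν1 ht)

theorem mittagLefflerKernel_one_le (hν : 0 < ν) (hν1 : ν < 1) (ht : 0 < t) :
    mittagLefflerKernel ν 1 t ≤ Gamma (ν + 1) * Gamma (1 - ν) * rpowKernel (1 - ν) t := by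
  have hΓ := (Gamma_pos_of_pos (sub_pos.2 hν1)).ne'
  have h := mittagLefflerKernel_one_mul_rpowKernel_le hν hν1.le ht
  rw [← le_div_iff₀ (rpowKernel_pos (by linarith) ht)] at h
  refine h.trans_eq ?_
  rw [rpowKernel, rpowKernel, add_sub_cancel_right, sub_sub_cancel_left, rpow_neg ht.le]
  field_simp

theorem mittagLefflerKernel_two_sub_le (hν : 0 < ν) (hν1 : ν < 1) (ht : 0 < t) :
    mittagLefflerKernel ν (2 - ν) t ≤
      Gamma (ν + 1) * Gamma (1 - ν) * rpowKernel (2 - 2 * ν) t := by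
  have hν' : 0 < 1 - ν := sub_pos.2 hν1
  rw [show 2 - ν = 1 - ν + 1 by ring, ← fracIntegral_mittagLefflerKernel hν hν' one_pos ht,
    show 2 - 2 * ν = 1 - ν + (1 - ν) by ring, ← fracIntegral_rpowKernel hν' hν' ht,
    ← fracIntegral_const_mul]
  refine fracIntegral_mono hν' ht.le
    (intervalIntegrable_rpowKernel_mul_mittagLefflerKernel hν hν' one_pos ht) ?_
    fun s hs => mittagLefflerKernel_one_le hν hν1 hs.1
  simpa only [mul_left_comm] using
    (intervalIntegrable_rpowKernel_mul_rpowKernel hν' hν' ht).const_mul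
      (Gamma (ν + 1) * Gamma (1 - ν))

theorem tendsto_mittagLefflerKernel_two_sub_div_rpow (hν : 0 < ν) (hν1 : ν < 1) :
    Tendsto (fun t => mittagLefflerKernel ν (2 - ν) t / t ^ (1 - ν)) atTop (𝓝 0) := by
  have hbound := (tendsto_rpow_neg_atTop hν).const_mul
    (Gamma (ν + 1) * Gamma (1 - ν) / Gamma (2 - 2 * ν))
  rw [mul_zero] at hbound
  refine tendsto_of_tendsto_of_tendsto_of_le_of_le' tendsto_const_nhds hbound ?_ ?_ <;>
    filter_upwards [eventually_gt_atTop 0] with t ht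
  · exact div_nonneg (mittagLefflerKernel_nonneg hν hν1.le (by linarith) ht) (rpow_nonneg ht.le _)
  · rw [div_le_iff₀ (rpow_pos_of_pos ht _), mul_assoc, ← rpow_add ht]
    refine (mittagLefflerKernel_two_sub_le hν hν1 ht).trans_eq ?_
    rw [rpowKernel, show 2 - 2 * ν - 1 = -ν + (1 - ν) by ring]
    ring

theorem tendsto_integral_mittagLefflerKernel_one_div_rpow (hν : 0 < ν) (hν1 : ν < 1) :
    Tendsto (fun t => (∫ s in 0..t, mittagLefflerKernel ν 1 s) / t ^ (1 - ν)) atTop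
      (𝓝 (Gamma (2 - ν))⁻¹) := by
  have hlim := (tendsto_mittagLefflerKernel_two_sub_div_rpow hν hν1).const_sub (Gamma (2 - ν))⁻¹
  rw [sub_zero] at hlim
  refine hlim.congr' ?_
  filter_upwards [eventually_gt_atTop 0] with t ht
  have hshift := mittagLefflerKernel_eq_sub hν (2 - ν) ht
  rw [sub_add_cancel, rpowKernel, show 2 - ν - 1 = 1 - ν by ring] at hshift
  have ht' : t ^ (1 - ν) ≠ 0 := (rpow_pos_of_pos ht _).ne'
  rw [integral_mittagLefflerKernel hν one_pos ht, one_add_one_eq_two, hshift]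
  field_simp
  ring

end Kernel

theorem tendsto_Gamma_mul_mul_mittagLeffler_neg {ν : ℝ} (hν : 0 < ν) (hν1 : ν < 1) :
    Tendsto (fun x => Gamma (1 - ν) * x * mittagLeffler ν (-x)) atTop (𝓝 1) := by
  have hν' : 0 < 1 - ν := sub_pos.2 hν1
  have hdensity := tendsto_div_rpow_of_tendsto_integral_div_rpow
    (mittagLefflerKernel_one_antitoneOn hν hν1.le)
    (fun t ht => intervalIntegrable_mittagLefflerKernel hν one_pos ht)
    (tendsto_integral_mittagLefflerKernel_one_div_rpow hν hν1)
  have hconst : Gamma (1 - ν) * ((1 - ν) * (Gamma (2 - ν))⁻¹) = 1 := by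
    have hΓ := (Gamma_pos_of_pos hν').ne'
    rw [show 2 - ν = 1 - ν + 1 by ring, Gamma_add_one hν'.ne']
    field_simp
  have hlim := (hdensity.const_mul (Gamma (1 - ν))).comp (tendsto_rpow_atTop (inv_pos.2 hν))
  rw [hconst] at hlim
  refine hlim.congr' ?_
  filter_upwards [eventually_ge_atTop 0] with x hx
  rw [Function.comp_apply, mittagLefflerKernel_one, sub_sub_cancel_left,
    rpow_neg (rpow_nonneg hx _), rpow_inv_rpow hx hν.ne', div_inv_eq_mul]
  ring

theorem tendsto_mittagLeffler_neg {ν : ℝ} (hν : 0 < ν) (hν1 : ν < 1) :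
    Tendsto (fun x => mittagLeffler ν (-x)) atTop (𝓝 0) := by
  have hlim := ((tendsto_Gamma_mul_mul_mittagLeffler_neg hν hν1).mul
    tendsto_inv_atTop_zero).const_mul (Gamma (1 - ν))⁻¹
  rw [mul_zero, mul_zero] at hlim
  refine hlim.congr' ?_
  have hΓ := (Gamma_pos_of_pos (sub_pos.2 hν1)).ne'
  filter_upwards [eventually_ne_atTop 0] with x hx
  field_simp

/-- Ultra-slow (logarithmic) decay of the relaxation response:
`Γ(1−ν) · (log(1+t))^ν · E_ν(−(log(1+t))^ν) → 1` as `t → +∞`; in particular the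
relaxation response tends to `0` at infinity. -/
theorem relaxation_ultraslow_decay (ν : ℝ) (hν : ν ∈ Set.Ioo (0:ℝ) 1) :
    Tendsto (fun t : ℝ => Real.Gamma (1 - ν) * (Real.log (1 + t)) ^ ν *
        mittagLeffler ν (-(Real.log (1 + t)) ^ ν)) atTop (nhds 1) ∧
    Tendsto (fun t : ℝ => mittagLeffler ν (-(Real.log (1 + t)) ^ ν))
      atTop (nhds 0) := by
  have hlog : Tendsto (fun t : ℝ => log (1 + t)) atTop atTop :=
    tendsto_log_atTop.comp (tendsto_atTop_add_const_left _ 1 tendsto_id)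
  have hx : Tendsto (fun t : ℝ => log (1 + t) ^ ν) atTop atTop :=
    (tendsto_rpow_atTop hν.1).comp hlog
  exact ⟨(tendsto_Gamma_mul_mul_mittagLeffler_neg hν.1 hν.2).comp hx,
    (tendsto_mittagLeffler_neg hν.1 hν.2).comp hx⟩
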